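/- Let Λ = Σ_{j∈ℤ} γ_j δ_{λ_j} with (λ_j)_{j∈ℤ} strictly increasing, unbounded above and below, γ_j > 0, L = {λ_j : j ∈ ℤ}, and assume: for some c > 0, Σ_{j=0}^{k} γ_j = ck + O(k/log²k) and Σ_{j=0}^{k} γ_{−j} = ck + O(k/log²k) as k → ∞; Card(L ∩ [0,x]) = O(x); and for all a, b ∈ ℝ, Card(L ∩ [0, x+a]) − Card(L ∩ [−x+b, 0]) = O(x/log²x) as x → ∞. Let S_Λ(z) = lim_{c'→∞} Σ_{λ ∈ L ∩ [−c',c']} γ_λ/(λ − z), and fix h ∈ ℝ. Then the set L' := S_Λ^{−1}(h) = {z ∈ ℂ∖L : S_Λ(z) = h} also satisfies: Card(L' ∩ [0,x]) = O(x) as x → ∞, and for all a, b ∈ ℝ, Card(L' ∩ [0, x+a]) − Card(L' ∩ [−x+b, 0]) = O(x/log²x) as x → ∞. -/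

import Mathlib

open Filter Set Asymptotics Topology

/-- A point of a strictly increasing sequence lies outside each gap `(lam i, lam (i + 1))`. -/
lemma StrictMono.le_or_succ_le {lam : ℤ → ℝ} (hmono : StrictMono lam) (i j : ℤ) :
    lam j ≤ lam i ∨ lam (i + 1) ≤ lam j := by
  rcases le_or_gt j i with hj | hj
  · exact Or.inl (hmono.monotone hj)
  · exact Or.inr (hmono.monotone hj)

lemma StrictMono.ne_of_mem_gap {lam : ℤ → ℝ} (hmono : StrictMono lam) {i : ℤ} {t : ℝ}
    (ht : t ∈ Ioo (lam i) (lam (i + 1))) (j : ℤ) : t ≠ lam j := by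
  rintro rfl
  rcases hmono.le_or_succ_le i j with hj | hj
  · exact absurd ht.1 (not_lt.2 hj)
  · exact absurd ht.2 (not_lt.2 hj)

/-- A point avoiding a two-sided unbounded increasing sequence lies in one of its gaps. -/
lemma StrictMono.exists_mem_gap {lam : ℤ → ℝ} (hmono : StrictMono lam)
    (hub : ¬ BddAbove (range lam)) (hlb : ¬ BddBelow (range lam)) {t : ℝ}
    (ht : ∀ j, t ≠ lam j) : ∃ i, t ∈ Ioo (lam i) (lam (i + 1)) := by
  obtain ⟨_, ⟨m, rfl⟩, hm⟩ := not_bddAbove_iff.1 hub t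
  obtain ⟨_, ⟨n, rfl⟩, hn⟩ := not_bddBelow_iff.1 hlb t
  obtain ⟨i, hi, hmax⟩ := Int.exists_greatest_of_bdd (P := fun j => lam j < t)
    ⟨m, fun j hj => (hmono.lt_iff_lt.1 (hj.trans hm)).le⟩ ⟨n, hn⟩
  refine ⟨i, hi, lt_of_le_of_ne (not_lt.1 fun hlt => ?_) (ht _)⟩
  have := hmax _ hlt
  omega

lemma StrictMono.finite_preimage_Icc {lam : ℤ → ℝ} (hmono : StrictMono lam)
    (hub : ¬ BddAbove (range lam)) (hlb : ¬ BddBelow (range lam)) (u v : ℝ) :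
    {j | lam j ∈ Icc u v}.Finite := by
  obtain ⟨_, ⟨m, rfl⟩, hm⟩ := not_bddAbove_iff.1 hub v
  obtain ⟨_, ⟨n, rfl⟩, hn⟩ := not_bddBelow_iff.1 hlb u
  exact (finite_Icc n m).subset fun j hj =>
    ⟨(hmono.lt_iff_lt.1 (hn.trans_le hj.1)).le, (hmono.lt_iff_lt.1 (hj.2.trans_lt hm)).le⟩

/-- If an injection sends every non-maximal element of `B` into `A`, then `B` has at most one
more element than `A`. -/
lemma Int.ncard_le_ncard_add_one {A B : Set ℤ} (hA : A.Finite) (hB : B.Finite) {f : ℤ → ℤ}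
    (hf : f.Injective) (hBA : ∀ j ∈ B, ∀ k ∈ B, j < k → f j ∈ A) :
    B.ncard ≤ A.ncard + 1 := by
  rcases B.eq_empty_or_nonempty with rfl | hne
  · simp
  obtain ⟨m, hm, hmax⟩ := hB.exists_maximal hne
  have hsub : f '' (B \ {m}) ⊆ A := by
    rintro _ ⟨j, ⟨hj, hjm⟩, rfl⟩
    refine hBA j hj m hm (lt_of_le_of_ne ?_ hjm)
    rcases le_total j m with h | h
    · exact h
    · exact hmax hj h
  have h1 := ncard_le_ncard hsub hA
  rw [ncard_image_of_injective _ hf] at h1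
  have h2 := ncard_sdiff_singleton_add_one hm hB
  omega

lemma natCard_range_inter_eq_ncard {f : ℤ → ℝ} (hf : f.Injective) (I : Set ℝ) :
    Nat.card ↥(range f ∩ I) = {j | f j ∈ I}.ncard := by
  rw [Nat.card_coe_set_eq, ← ncard_image_of_injective _ hf]
  congr 1
  ext t
  constructor
  · rintro ⟨⟨j, rfl⟩, hj⟩
    exact ⟨j, hj, rfl⟩
  · rintro ⟨j, hj, rfl⟩
    exact ⟨⟨j, rfl⟩, hj⟩

/-- Interlacing sequences have the same number of points in a compact interval, up to one. -/
lemma abs_natCard_sub_natCard_le_one_of_interlacing {lam μ : ℤ → ℝ} (hmono : StrictMono lam)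
    (hub : ¬ BddAbove (range lam)) (hlb : ¬ BddBelow (range lam))
    (hμ : ∀ i, μ i ∈ Ioo (lam i) (lam (i + 1))) (u v : ℝ) :
    |(Nat.card ↥(range μ ∩ Icc u v) : ℝ) - Nat.card ↥(range lam ∩ Icc u v)| ≤ 1 := by
  have hlt : ∀ {j k : ℤ}, j < k → μ j < lam k := fun {j k} hjk =>
    (hμ j).2.trans_le (hmono.monotone hjk)
  have hμmono : StrictMono μ := fun j k hjk => (hlt hjk).trans (hμ k).1
  have hA := hmono.finite_preimage_Icc hub hlb u v
  have hB : {j | μ j ∈ Icc u v}.Finite := by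
    refine hμmono.finite_preimage_Icc ?_ ?_ u v
    · rintro ⟨M, hM⟩
      exact hub ⟨M, by rintro _ ⟨j, rfl⟩; exact (hμ j).1.le.trans (hM ⟨j, rfl⟩)⟩
    · rintro ⟨M, hM⟩
      refine hlb ⟨M, ?_⟩
      rintro _ ⟨j, rfl⟩
      exact (hM ⟨j - 1, rfl⟩).trans (hlt (by omega)).le
  rw [natCard_range_inter_eq_ncard hμmono.injective, natCard_range_inter_eq_ncard hmono.injective]
  have h1 := Int.ncard_le_ncard_add_one hA hB (add_left_injective (1 : ℤ))
    fun j hj k hk hjk => (⟨hj.1.trans (hμ j).2.le,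
      (hmono.monotone (show j + 1 ≤ k from hjk)).trans ((hμ k).1.le.trans hk.2)⟩ :
        lam (j + 1) ∈ Icc u v)
  have h2 := Int.ncard_le_ncard_add_one hB hA Function.injective_id
    fun j hj k hk hjk => (⟨hj.1.trans (hμ j).1.le, (hlt hjk).le.trans hk.2⟩ : μ j ∈ Icc u v)
  have h1' : ({j | μ j ∈ Icc u v}.ncard : ℝ) ≤ {j | lam j ∈ Icc u v}.ncard + 1 := by
    exact_mod_cast h1
  have h2' : ({j | lam j ∈ Icc u v}.ncard : ℝ) ≤ {j | μ j ∈ Icc u v}.ncard + 1 := by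
    exact_mod_cast h2
  rw [abs_le]
  constructor <;> linarith

lemma div_sub_sub_div_sub {l s t : ℝ} (g : ℝ) (hs : s ≠ l) (ht : t ≠ l) :
    g / (l - t) - g / (l - s) = g * (t - s) / ((l - t) * (l - s)) := by
  have h1 : l - s ≠ 0 := sub_ne_zero.2 hs.symm
  have h2 : l - t ≠ 0 := sub_ne_zero.2 ht.symm
  field_simp
  ring

section Gap

variable {lam γ : ℤ → ℝ} {F : ℝ → Finset ℤ} {s : ℝ → ℝ} {i : ℤ}

lemma StrictMono.sub_mul_sub_pos_of_mem_gap (hmono : StrictMono lam) {t u : ℝ}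
    (ht : t ∈ Ioo (lam i) (lam (i + 1))) (hu : u ∈ Ioo (lam i) (lam (i + 1))) (j : ℤ) :
    0 < (lam j - t) * (lam j - u) := by
  rcases hmono.le_or_succ_le i j with hj | hj
  · exact mul_pos_of_neg_of_neg (by linarith [ht.1]) (by linarith [hu.1])
  · exact mul_pos (by linarith [ht.2]) (by linarith [hu.2])

/-- On a gap every single term bounds the increment of the Stieltjes transform from below. -/
lemma term_sub_le_stieltjes_sub (hmono : StrictMono lam) (hγ : ∀ j, 0 < γ j)
    (hF : ∀ j, ∀ᶠ r in atTop, j ∈ F r)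
    (hs : ∀ t, (∀ j, t ≠ lam j) →
      Tendsto (fun r => ∑ j ∈ F r, γ j / (lam j - t)) atTop (𝓝 (s t)))
    {t u : ℝ} (ht : t ∈ Ioo (lam i) (lam (i + 1))) (hu : u ∈ Ioo (lam i) (lam (i + 1)))
    (htu : t ≤ u) (k : ℤ) :
    γ k / (lam k - u) - γ k / (lam k - t) ≤ s u - s t := by
  have ht' := hmono.ne_of_mem_gap ht
  have hu' := hmono.ne_of_mem_gap hu
  refine ge_of_tendsto ((hs u hu').sub (hs t ht')) ?_
  filter_upwards [hF k] with r hr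
  rw [← Finset.sum_sub_distrib]
  refine Finset.single_le_sum (f := fun j => γ j / (lam j - u) - γ j / (lam j - t))
    (fun j _ => ?_) hr
  simp only [div_sub_sub_div_sub (γ j) (ht' j) (hu' j)]
  exact div_nonneg (mul_nonneg (hγ j).le (sub_nonneg.2 htu))
    (hmono.sub_mul_sub_pos_of_mem_gap hu ht j).le

lemma stieltjes_strictMonoOn_gap (hmono : StrictMono lam) (hγ : ∀ j, 0 < γ j)
    (hF : ∀ j, ∀ᶠ r in atTop, j ∈ F r)
    (hs : ∀ t, (∀ j, t ≠ lam j) →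
      Tendsto (fun r => ∑ j ∈ F r, γ j / (lam j - t)) atTop (𝓝 (s t))) :
    StrictMonoOn s (Ioo (lam i) (lam (i + 1))) := by
  intro t ht u hu htu
  have h := term_sub_le_stieltjes_sub hmono hγ hF hs ht hu htu.le i
  rw [div_sub_sub_div_sub (γ i) (hmono.ne_of_mem_gap ht i) (hmono.ne_of_mem_gap hu i)] at h
  have := div_pos (mul_pos (hγ i) (sub_pos.2 htu)) (hmono.sub_mul_sub_pos_of_mem_gap hu ht i)
  linarith

/-- Points of a compact subinterval of a gap have comparable distances to the sequence. -/
lemma StrictMono.abs_sub_le_mul_abs_sub (hmono : StrictMono lam) {a b δ p q : ℝ} (hδ : 0 < δ)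
    (ha : lam i + δ ≤ a) (hb : b + δ ≤ lam (i + 1)) (hp : p ∈ Icc a b) (hq : q ∈ Icc a b)
    (j : ℤ) : |lam j - q| ≤ (1 + (b - a) / δ) * |lam j - p| := by
  have hδp : δ ≤ |lam j - p| := by
    rcases hmono.le_or_succ_le i j with hj | hj
    · exact le_trans (by linarith [hp.1]) (neg_le_abs _)
    · exact le_trans (by linarith [hp.2]) (le_abs_self _)
  have hpq : |p - q| ≤ b - a := by
    rw [abs_le]
    constructor <;> linarith [hp.1, hp.2, hq.1, hq.2]
  have hab : 0 ≤ b - a := (abs_nonneg _).trans hpq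
  have h1 : |lam j - q| ≤ |lam j - p| + |p - q| := abs_sub_le _ _ _
  have h2 : b - a ≤ (b - a) / δ * |lam j - p| := by
    rw [div_mul_eq_mul_div, le_div_iff₀ hδ]
    exact mul_le_mul_of_nonneg_left hδp hab
  linarith

lemma stieltjes_continuousOn_Icc (hmono : StrictMono lam) (hγ : ∀ j, 0 < γ j)
    (hs : ∀ t, (∀ j, t ≠ lam j) →
      Tendsto (fun r => ∑ j ∈ F r, γ j / (lam j - t)) atTop (𝓝 (s t)))
    {a b : ℝ} (ha : lam i < a) (hab : a < b) (hb : b < lam (i + 1)) :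
    ContinuousOn s (Icc a b) := by
  obtain ⟨δ, hδ, hδa, hδb⟩ : ∃ δ, 0 < δ ∧ lam i + δ ≤ a ∧ b + δ ≤ lam (i + 1) := by
    refine ⟨min (a - lam i) (lam (i + 1) - b), lt_min (by linarith) (by linarith), ?_, ?_⟩
    · linarith [min_le_left (a - lam i) (lam (i + 1) - b)]
    · linarith [min_le_right (a - lam i) (lam (i + 1) - b)]
  set K := 1 + (b - a) / δ
  have hgap : ∀ {t}, t ∈ Icc a b → t ∈ Ioo (lam i) (lam (i + 1)) := fun ht =>
    ⟨ha.trans_le ht.1, ht.2.trans_lt hb⟩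
  have haI : a ∈ Icc a b := left_mem_Icc.2 hab.le
  have hbI : b ∈ Icc a b := right_mem_Icc.2 hab.le
  have key : ∀ t ∈ Icc a b, ∀ u ∈ Icc a b,
      |s u - s t| ≤ K ^ 2 / (b - a) * (s b - s a) * |u - t| := by
    intro t ht u hu
    have ht' := hmono.ne_of_mem_gap (hgap ht)
    have hu' := hmono.ne_of_mem_gap (hgap hu)
    have ha' := hmono.ne_of_mem_gap (hgap haI)
    have hb' := hmono.ne_of_mem_gap (hgap hbI)
    refine le_of_tendsto_of_tendsto' ((hs u hu').sub (hs t ht')).abs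
      ((((hs b hb').sub (hs a ha')).const_mul (K ^ 2 / (b - a))).mul_const |u - t|) fun r => ?_
    rw [← Finset.sum_sub_distrib, ← Finset.sum_sub_distrib, Finset.mul_sum, Finset.sum_mul]
    refine (Finset.abs_sum_le_sum_abs _ _).trans (Finset.sum_le_sum fun j _ => ?_)
    rw [div_sub_sub_div_sub (γ j) (ht' j) (hu' j), div_sub_sub_div_sub (γ j) (ha' j) (hb' j)]
    have hP := hmono.sub_mul_sub_pos_of_mem_gap (hgap hu) (hgap ht) j
    have hQ := hmono.sub_mul_sub_pos_of_mem_gap (hgap hbI) (hgap haI) j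
    have hle : (lam j - b) * (lam j - a) ≤ K ^ 2 * ((lam j - u) * (lam j - t)) := by
      rw [← abs_of_pos hP, ← abs_of_pos hQ, abs_mul, abs_mul]
      have h1 := hmono.abs_sub_le_mul_abs_sub hδ hδa hδb hu hbI j
      have h2 := hmono.abs_sub_le_mul_abs_sub hδ hδa hδb ht haI j
      calc _ ≤ (K * |lam j - u|) * (K * |lam j - t|) :=
            mul_le_mul h1 h2 (abs_nonneg _) ((abs_nonneg _).trans h1)
        _ = _ := by ring
    rw [abs_div, abs_mul, abs_of_pos hP, abs_of_pos (hγ j)]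
    have hba : b - a ≠ 0 := by linarith
    have hrw : K ^ 2 / (b - a) * (γ j * (b - a) / ((lam j - b) * (lam j - a))) * |u - t|
        = K ^ 2 * (γ j * |u - t|) / ((lam j - b) * (lam j - a)) := by
      field_simp
    rw [hrw, div_le_div_iff₀ hP hQ]
    calc _ ≤ γ j * |u - t| * (K ^ 2 * ((lam j - u) * (lam j - t))) :=
          mul_le_mul_of_nonneg_left hle (mul_nonneg (hγ j).le (abs_nonneg _))
      _ = _ := by ring
  have hC : 0 ≤ K ^ 2 / (b - a) * (s b - s a) := by
    have := (abs_nonneg _).trans (key a haI b hbI)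
    exact nonneg_of_mul_nonneg_left this (abs_pos.2 (by linarith))
  refine (LipschitzOnWith.of_dist_le_mul (K := ⟨_, hC⟩) fun u hu t ht => ?_).continuousOn
  rw [Real.dist_eq, Real.dist_eq]
  exact key t ht u hu

/-- In each gap the Stieltjes transform takes every real value. -/
lemma exists_stieltjes_eq_of_gap (hmono : StrictMono lam) (hγ : ∀ j, 0 < γ j)
    (hF : ∀ j, ∀ᶠ r in atTop, j ∈ F r)
    (hs : ∀ t, (∀ j, t ≠ lam j) →
      Tendsto (fun r => ∑ j ∈ F r, γ j / (lam j - t)) atTop (𝓝 (s t))) (h : ℝ) :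
    ∃ t ∈ Ioo (lam i) (lam (i + 1)), s t = h := by
  obtain ⟨m, hm⟩ : (Ioo (lam i) (lam (i + 1))).Nonempty := nonempty_Ioo.2 (hmono (by omega))
  set M := |h - s m| + 1
  have hMpos : 0 < M := by positivity
  have hsmall : ∀ {g d : ℝ}, 0 < g → 0 < d → 0 < g / (g / d + M) ∧ g / (g / d + M) < d := by
    intro g d hg hd
    have hgd := div_pos hg hd
    refine ⟨by positivity, ?_⟩
    rw [div_lt_iff₀ (by positivity), mul_add, mul_div_cancel₀ _ hd.ne']
    linarith [mul_pos hd hMpos]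
  obtain ⟨b, hmb, hb, hsb⟩ : ∃ b, m < b ∧ b < lam (i + 1) ∧ h ≤ s b := by
    obtain ⟨h1, h2⟩ := hsmall (hγ (i + 1)) (sub_pos.2 hm.2)
    refine ⟨lam (i + 1) - γ (i + 1) / (γ (i + 1) / (lam (i + 1) - m) + M),
      by linarith, by linarith, ?_⟩
    have := term_sub_le_stieltjes_sub hmono hγ hF hs hm
      (u := lam (i + 1) - γ (i + 1) / (γ (i + 1) / (lam (i + 1) - m) + M))
      ⟨by linarith [hm.1], by linarith⟩ (by linarith) (i + 1)
    rw [sub_sub_cancel, div_div_cancel₀ (hγ _).ne'] at this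
    linarith [le_abs_self (h - s m)]
  obtain ⟨a, ha, ham, hsa⟩ : ∃ a, lam i < a ∧ a < m ∧ s a ≤ h := by
    obtain ⟨h1, h2⟩ := hsmall (hγ i) (sub_pos.2 hm.1)
    refine ⟨lam i + γ i / (γ i / (m - lam i) + M), by linarith, by linarith, ?_⟩
    have := term_sub_le_stieltjes_sub hmono hγ hF hs
      (t := lam i + γ i / (γ i / (m - lam i) + M))
      ⟨by linarith, by linarith [hm.2]⟩ hm (by linarith) i
    rw [sub_add_cancel_left, div_neg, div_div_cancel₀ (hγ _).ne', ← neg_sub m, div_neg] at this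
    linarith [neg_abs_le (h - s m)]
  obtain ⟨t, ht, hst⟩ := intermediate_value_Icc (ham.trans hmb).le
    (stieltjes_continuousOn_Icc hmono hγ hs ha (ham.trans hmb) hb) ⟨hsa, hsb⟩
  exact ⟨t, ⟨ha.trans_le ht.1, ht.2.trans_lt hb⟩, hst⟩

end Gap

/-- The real level set of a Stieltjes transform is the range of a sequence interlacing its
poles. -/
lemma exists_interlacing_range_eq_level_set {lam γ : ℤ → ℝ} (hmono : StrictMono lam)
    (hub : ¬ BddAbove (range lam)) (hlb : ¬ BddBelow (range lam)) (hγ : ∀ j, 0 < γ j)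
    {S : ℂ → ℂ}
    (hS : ∀ z : ℂ, (∀ j : ℤ, z ≠ (lam j : ℂ)) →
      Tendsto
        (fun r : ℝ => ∑' j : {j : ℤ // lam j ∈ Icc (-r) r},
          ((γ (j : ℤ) : ℂ) / ((lam (j : ℤ) : ℂ) - z)))
        atTop (𝓝 (S z)))
    (h : ℝ) :
    ∃ μ : ℤ → ℝ, (∀ i, μ i ∈ Ioo (lam i) (lam (i + 1))) ∧
      {t : ℝ | (∀ j : ℤ, t ≠ lam j) ∧ S (t : ℂ) = (h : ℂ)} = range μ := by
  have hfin := fun r : ℝ => hmono.finite_preimage_Icc hub hlb (-r) r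
  set F : ℝ → Finset ℤ := fun r => (hfin r).toFinset with hFdef
  have hF : ∀ j, ∀ᶠ r in atTop, j ∈ F r := by
    intro j
    filter_upwards [eventually_ge_atTop |lam j|] with r hr
    simpa [hFdef] using abs_le.1 hr
  have hreal : ∀ t : ℝ, (∀ j, t ≠ lam j) →
      Tendsto (fun r => ((∑ j ∈ F r, γ j / (lam j - t) : ℝ) : ℂ)) atTop (𝓝 (S t)) := by
    intro t ht
    refine (hS t fun j => by exact_mod_cast ht j).congr fun r => ?_
    have := Finset.tsum_subtype (F r) fun j => (γ j : ℂ) / ((lam j : ℂ) - t)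
    push_cast
    rw [← this]
    exact (Equiv.subtypeEquivRight fun j => by simp [hFdef]).tsum_eq
      (fun j : {j // j ∈ F r} => (γ (j : ℤ) : ℂ) / ((lam (j : ℤ) : ℂ) - t))
  have hs : ∀ t, (∀ j, t ≠ lam j) →
      Tendsto (fun r => ∑ j ∈ F r, γ j / (lam j - t)) atTop (𝓝 (S (t : ℂ)).re) := by
    intro t ht
    simpa only [Function.comp_def, Complex.ofReal_re] using
      (Complex.continuous_re.tendsto _).comp (hreal t ht)
  have him : ∀ t : ℝ, (∀ j, t ≠ lam j) → (S (t : ℂ)).im = 0 := by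
    intro t ht
    have := (Complex.continuous_im.tendsto _).comp (hreal t ht)
    simp only [Function.comp_def, Complex.ofReal_im] at this
    exact tendsto_nhds_unique this tendsto_const_nhds
  choose μ hμ hμh using fun i : ℤ => exists_stieltjes_eq_of_gap (i := i) hmono hγ hF hs h
  refine ⟨μ, hμ, ?_⟩
  ext t
  constructor
  · rintro ⟨ht, hSt⟩
    obtain ⟨i, hi⟩ := hmono.exists_mem_gap hub hlb ht
    refine ⟨i, (stieltjes_strictMonoOn_gap hmono hγ hF hs).injOn (hμ i) hi ?_⟩
    simp only [hμh, hSt, Complex.ofReal_re]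
  · rintro ⟨i, rfl⟩
    have hne := hmono.ne_of_mem_gap (hμ i)
    exact ⟨hne, Complex.ext (by simpa using hμh i) (by simpa using him _ hne)⟩

lemma one_isBigO_div_log_sq :
    (fun _ : ℝ => (1 : ℝ)) =O[atTop] (fun x : ℝ => x / Real.log x ^ 2) := by
  refine IsBigO.of_bound 1 ?_
  filter_upwards [(Real.isLittleO_pow_log_id_atTop (n := 2)).bound one_pos,
    eventually_gt_atTop (1 : ℝ)] with x hx hx1
  have hlog : 0 < Real.log x ^ 2 := pow_pos (Real.log_pos hx1) 2
  rw [one_mul, id, Real.norm_of_nonneg hlog.le, Real.norm_of_nonneg (by linarith)] at hx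
  rw [one_mul, norm_one, Real.norm_of_nonneg (div_nonneg (by linarith) hlog.le),
    one_le_div hlog]
  exact hx

/-- The level set `L' = S_Λ^{-1}(h)` inherits the counting estimates of `L`:
`Card(L' ∩ [0,x]) = O(x)` and, for all `a, b`,
`Card(L' ∩ [0,x+a]) - Card(L' ∩ [-x+b,0]) = O(x/log²x)`. -/
theorem stieltjes_level_set_counting
    (lam : ℤ → ℝ) (γ : ℤ → ℝ) (c : ℝ) (hc : 0 < c)
    (hmono : StrictMono lam)
    (hub : ¬ BddAbove (Set.range lam)) (hlb : ¬ BddBelow (Set.range lam))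
    (hγpos : ∀ j, 0 < γ j)
    (hsum1 : (fun k : ℕ => (∑ j ∈ Finset.range (k + 1), γ (j : ℤ)) - c * (k : ℝ))
      =O[atTop] (fun k : ℕ => (k : ℝ) / (Real.log (k : ℝ)) ^ 2))
    (hsum2 : (fun k : ℕ => (∑ j ∈ Finset.range (k + 1), γ (-(j : ℤ))) - c * (k : ℝ))
      =O[atTop] (fun k : ℕ => (k : ℝ) / (Real.log (k : ℝ)) ^ 2))
    (hcard1 : (fun x : ℝ => (Nat.card ↥(Set.range lam ∩ Set.Icc 0 x) : ℝ))
      =O[atTop] (fun x : ℝ => x))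
    (hcard2 : ∀ a b : ℝ,
      (fun x : ℝ => (Nat.card ↥(Set.range lam ∩ Set.Icc 0 (x + a)) : ℝ)
          - (Nat.card ↥(Set.range lam ∩ Set.Icc (-x + b) 0) : ℝ))
        =O[atTop] (fun x : ℝ => x / (Real.log x) ^ 2))
    (S : ℂ → ℂ)
    (hS : ∀ z : ℂ, (∀ j : ℤ, z ≠ (lam j : ℂ)) →
      Tendsto
        (fun c' : ℝ => ∑' j : {j : ℤ // lam j ∈ Set.Icc (-c') c'},
          ((γ (j : ℤ) : ℂ) / ((lam (j : ℤ) : ℂ) - z)))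
        atTop (𝓝 (S z)))
    (h : ℝ) :
    (fun x : ℝ =>
        (Nat.card ↥({t : ℝ | (∀ j : ℤ, t ≠ lam j) ∧ S (t : ℂ) = (h : ℂ)}
          ∩ Set.Icc 0 x) : ℝ))
      =O[atTop] (fun x : ℝ => x)
    ∧ ∀ a b : ℝ,
      (fun x : ℝ =>
          (Nat.card ↥({t : ℝ | (∀ j : ℤ, t ≠ lam j) ∧ S (t : ℂ) = (h : ℂ)}
            ∩ Set.Icc 0 (x + a)) : ℝ)
          - (Nat.card ↥({t : ℝ | (∀ j : ℤ, t ≠ lam j) ∧ S (t : ℂ) = (h : ℂ)}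
            ∩ Set.Icc (-x + b) 0) : ℝ))
        =O[atTop] (fun x : ℝ => x / (Real.log x) ^ 2) := by
  obtain ⟨μ, hμ, hrange⟩ := exists_interlacing_range_eq_level_set hmono hub hlb hγpos hS h
  rw [hrange]
  have hdiff := abs_natCard_sub_natCard_le_one_of_interlacing hmono hub hlb hμ
  constructor
  · have hone : (fun _ : ℝ => (1 : ℝ)) =O[atTop] (fun x : ℝ => x) :=
      (isLittleO_const_id_atTop (1 : ℝ)).isBigO
    have hbdd : (fun x : ℝ => (Nat.card ↥(range μ ∩ Icc 0 x) : ℝ)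
        - Nat.card ↥(range lam ∩ Icc 0 x)) =O[atTop] (fun _ : ℝ => (1 : ℝ)) :=
      IsBigO.of_bound 1 (.of_forall fun x => by simpa using hdiff 0 x)
    exact ((hbdd.trans hone).add hcard1).congr_left fun x => sub_add_cancel _ _
  · intro a b
    have hright : (fun x : ℝ => (Nat.card ↥(range μ ∩ Icc 0 (x + a)) : ℝ)
        - Nat.card ↥(range lam ∩ Icc 0 (x + a))) =O[atTop] (fun _ : ℝ => (1 : ℝ)) :=
      IsBigO.of_bound 1 (.of_forall fun x => by simpa using hdiff 0 (x + a))
    have hleft : (fun x : ℝ => (Nat.card ↥(range μ ∩ Icc (-x + b) 0) : ℝ)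
        - Nat.card ↥(range lam ∩ Icc (-x + b) 0)) =O[atTop] (fun _ : ℝ => (1 : ℝ)) :=
      IsBigO.of_bound 1 (.of_forall fun x => by simpa using hdiff (-x + b) 0)
    exact (((hright.sub hleft).trans one_isBigO_div_log_sq).add (hcard2 a b)).congr_left
      fun x => by ring
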